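/- In any nondegenerate triangle, the distance from the nine-point center X5 to the mittenpunkt X9 and the distance from X5 to the Spieker center X10 satisfy dist(X5, X10) ≤ dist(X5, X9) ≤ (7 − 4√2)·dist(X5, X10). -/

import Mathlib

/-- The point with normalized barycentric coordinates `(x : y : z)`
with respect to the triangle `A B C`. -/
noncomputable def bary (A B C : EuclideanSpace ℝ (Fin 2)) (x y z : ℝ) :
    EuclideanSpace ℝ (Fin 2) :=
  (x + y + z)⁻¹ • (x • A + y • B + z • C)

/-- The triangle center with barycentric coordinates
`(f a b c : f b c a : f c a b)` where `a, b, c` are the side lengths. -/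
noncomputable def tcenter (f : ℝ → ℝ → ℝ → ℝ) (A B C : EuclideanSpace ℝ (Fin 2)) :
    EuclideanSpace ℝ (Fin 2) :=
  bary A B C (f (dist B C) (dist C A) (dist A B))
    (f (dist C A) (dist A B) (dist B C))
    (f (dist A B) (dist B C) (dist C A))

open Real in
/-- The one-variable heart of the upper bound. -/
lemma aux_upper (x k : ℝ) (hx : 0 < x) (hx9 : x ≤ 1 / 9)
    (hD : k ^ 2 - (1 + 18 * x - 27 * x ^ 2) / 4 * k + x ≤ 0) :
    k * ((1 - x) * ((9 * (7 - 4 * √2) ^ 2 - 1) * x - ((7 - 4 * √2) ^ 2 - 1)))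
      ≤ 16 * x ^ 2 * (1 + 3 * x) := by
  have hr2 : √2 ^ 2 = 2 := Real.sq_sqrt (by norm_num)
  have hr1 : 1.41421356 < √2 := Real.lt_sqrt_of_sq_lt (by norm_num)
  have hr4 : √2 < 1.41421357 := (Real.sqrt_lt' (by norm_num)).2 (by norm_num)
  generalize √2 = r at *
  have hK : (7 - 4 * r) ^ 2 = 81 - 56 * r := by linear_combination 16 * hr2
  rw [hK]
  set G := (1 - x) * ((9 * (81 - 56 * r) - 1) * x - ((81 - 56 * r) - 1)) with hG
  set M := (1 + 18 * x - 27 * x ^ 2) / 4 with hM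
  set H := 16 * x ^ 2 * (1 + 3 * x) with hH
  have hx2 : x ^ 2 ≤ x / 9 := by nlinarith
  have hx20 : 0 < x ^ 2 := by positivity
  have hx30 : 0 < x ^ 3 := by positivity
  have hV : 0 ≤ 2 * H - M * G := by
    have e : 2 * H - M * G = (1 - 9 * x) * ((20 - 14 * r) + (338 - 238 * r) * x
        + (-920 + 630 * r) * x ^ 2 + (546 - 378 * r) * x ^ 3) := by
      rw [hH, hM, hG]; ring
    rw [e]
    apply mul_nonneg (by linarith)
    have h1 : 0 ≤ (20 - 14 * r) - 0.201 := by linarith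
    have h2 : 0 ≤ ((338 - 238 * r) - 1.417) * x := mul_nonneg (by linarith) hx.le
    have h3 : 0 ≤ ((-920 + 630 * r) + 29.046) * x ^ 2 := mul_nonneg (by linarith) hx20.le
    have h4 : 0 ≤ ((546 - 378 * r) - 11.427) * x ^ 3 := mul_nonneg (by linarith) hx30.le
    nlinarith
  have hP : 0 ≤ H ^ 2 - M * H * G + x * G ^ 2 := by
    have e : H ^ 2 - M * H * G + x * G ^ 2 = x * (1 - 9 * x) ^ 2 * ((x + (-5 + 3 * r) / 7) ^ 2
        * ((7296 - 5120 * r) + (-4032 + 2912 * r) * x + (-2912 + 2016 * r) * x ^ 2)) := by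
      have hr3 : r ^ 3 = 2 * r := by linear_combination r * hr2
      rw [hH, hM, hG]
      ring_nf
      simp only [hr2, hr3]
      ring
    rw [e]
    have h1 : 0 ≤ (-4032 + 2912 * r) * x := mul_nonneg (by linarith) hx.le
    have h2 : 0 ≤ ((-2912 + 2016 * r) + 61) * x ^ 2 := mul_nonneg (by linarith) hx20.le
    have : 0 ≤ (7296 - 5120 * r) + (-4032 + 2912 * r) * x + (-2912 + 2016 * r) * x ^ 2 := by
      nlinarith
    positivity
  by_contra hc
  push Not at hc
  have h1 : 0 < (k * G - H) * (k * G - H + (2 * H - M * G)) :=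
    mul_pos (by linarith) (by linarith)
  have h2 : G ^ 2 * (k ^ 2 - M * k + x) ≤ 0 :=
    mul_nonpos_of_nonneg_of_nonpos (sq_nonneg G) hD
  nlinarith

/-- The lower bound in terms of the elementary symmetric functions. -/
lemma alg_lower (u v w : ℝ) (hu : 0 < u) (hv : 0 < v) (hw : 0 < w)
    (p q t : ℝ) (hp : p = u + v + w) (hq : q = u * v + v * w + w * u) (ht : t = u * v * w) :
    (p * q - t) ^ 2 / (16 * p * t) - (p * q - t) / (2 * p) ≤
      (p * q - t) ^ 2 / (16 * p * t) - t * (p * q + 3 * t) / q ^ 2 := by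
  have hp0 : 0 < p := by rw [hp]; positivity
  have hq0 : 0 < q := by rw [hq]; positivity
  have ht0 : 0 < t := by rw [ht]; positivity
  have h1 : 3 * p * t ≤ q ^ 2 := by
    rw [hp, hq, ht]
    nlinarith [sq_nonneg (u * v - v * w), sq_nonneg (v * w - w * u), sq_nonneg (w * u - u * v)]
  have h2 : 3 * q ≤ p ^ 2 := by
    rw [hp, hq]
    nlinarith [sq_nonneg (u - v), sq_nonneg (v - w), sq_nonneg (w - u)]
  have h3 : 9 * t ≤ p * q := by
    rw [hp, hq, ht]
    nlinarith [mul_nonneg hu.le (sq_nonneg (v - w)), mul_nonneg hv.le (sq_nonneg (u - w)),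
      mul_nonneg hw.le (sq_nonneg (u - v))]
  have h4 : t * (p * q + 3 * t) / q ^ 2 ≤ (p * q - t) / (2 * p) := by
    rw [div_le_div_iff₀ (by positivity) (by positivity)]
    nlinarith [mul_le_mul_of_nonneg_left h1 (mul_pos hp0 hq0).le,
      mul_le_mul_of_nonneg_left h2 (mul_pos hq0 ht0).le,
      mul_le_mul_of_nonneg_left h3 (mul_pos hp0 ht0).le]
  linarith

open Real in
/-- The upper bound in terms of the elementary symmetric functions. -/
lemma alg_upper (u v w : ℝ) (hu : 0 < u) (hv : 0 < v) (hw : 0 < w)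
    (p q t : ℝ) (hp : p = u + v + w) (hq : q = u * v + v * w + w * u) (ht : t = u * v * w) :
    (p * q - t) ^ 2 / (16 * p * t) - t * (p * q + 3 * t) / q ^ 2 ≤
      (7 - 4 * √2) ^ 2 * ((p * q - t) ^ 2 / (16 * p * t) - (p * q - t) / (2 * p)) := by
  have hp0 : 0 < p := by rw [hp]; positivity
  have hq0 : 0 < q := by rw [hq]; positivity
  have ht0 : 0 < t := by rw [ht]; positivity
  have h3 : 9 * t ≤ p * q := by
    rw [hp, hq, ht]
    nlinarith [mul_nonneg hu.le (sq_nonneg (v - w)), mul_nonneg hv.le (sq_nonneg (u - w)),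
      mul_nonneg hw.le (sq_nonneg (u - v))]
  have hdisc : 0 ≤ p ^ 2 * q ^ 2 - 4 * q ^ 3 - 4 * p ^ 3 * t + 18 * p * q * t - 27 * t ^ 2 := by
    have : p ^ 2 * q ^ 2 - 4 * q ^ 3 - 4 * p ^ 3 * t + 18 * p * q * t - 27 * t ^ 2
      = ((u - v) * (v - w) * (w - u)) ^ 2 := by rw [hp, hq, ht]; ring
    rw [this]; positivity
  clear hp hq ht
  obtain ⟨k, hk⟩ : ∃ k, k = q / p ^ 2 := ⟨_, rfl⟩
  obtain ⟨x, hx⟩ : ∃ x, x = t / (p * q) := ⟨_, rfl⟩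
  have hk0 : 0 < k := by rw [hk]; positivity
  have hx0 : 0 < x := by rw [hx]; positivity
  have eq : q = k * p ^ 2 := by rw [hk]; field_simp
  have et : t = x * k * p ^ 3 := by rw [hx, hk]; field_simp
  have hx9 : x ≤ 1 / 9 := by
    rw [hx, div_le_div_iff₀ (by positivity) (by norm_num)]; linarith
  clear hk hx
  subst eq et
  have hD : k ^ 2 - (1 + 18 * x - 27 * x ^ 2) / 4 * k + x ≤ 0 := by
    have e : p ^ 2 * (k * p ^ 2) ^ 2 - 4 * (k * p ^ 2) ^ 3 - 4 * p ^ 3 * (x * k * p ^ 3)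
        + 18 * p * (k * p ^ 2) * (x * k * p ^ 3) - 27 * (x * k * p ^ 3) ^ 2
        = (4 * k * p ^ 6) * (-(k ^ 2 - (1 + 18 * x - 27 * x ^ 2) / 4 * k + x)) := by ring
    rw [e] at hdisc
    have := nonneg_of_mul_nonneg_right hdisc (by positivity)
    linarith
  have key := aux_upper x k hx0 hx9 hD
  rw [← sub_nonneg]
  have e : (7 - 4 * √2) ^ 2 * ((p * (k * p ^ 2) - x * k * p ^ 3) ^ 2 / (16 * p * (x * k * p ^ 3))
        - (p * (k * p ^ 2) - x * k * p ^ 3) / (2 * p))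
      - ((p * (k * p ^ 2) - x * k * p ^ 3) ^ 2 / (16 * p * (x * k * p ^ 3))
        - x * k * p ^ 3 * (p * (k * p ^ 2) + 3 * (x * k * p ^ 3)) / (k * p ^ 2) ^ 2)
      = p ^ 2 / (16 * x) * (16 * x ^ 2 * (1 + 3 * x)
        - k * ((1 - x) * ((9 * (7 - 4 * √2) ^ 2 - 1) * x - ((7 - 4 * √2) ^ 2 - 1)))) := by
    generalize √2 = r
    field_simp
    ring
  rw [e]
  exact mul_nonneg (by positivity) (by linarith)

/-- Squared distance between two points in barycentric coordinates. -/
lemma dist_sq_bary (A B C : EuclideanSpace ℝ (Fin 2)) (x y z x' y' z' : ℝ)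
    (hS : x + y + z ≠ 0) (hS' : x' + y' + z' ≠ 0) (α β γ : ℝ)
    (hα : α = x / (x + y + z) - x' / (x' + y' + z'))
    (hβ : β = y / (x + y + z) - y' / (x' + y' + z'))
    (hγ : γ = z / (x + y + z) - z' / (x' + y' + z')) :
    dist (bary A B C x y z) (bary A B C x' y' z') ^ 2 =
      -(β * γ * dist B C ^ 2 + γ * α * dist C A ^ 2 + α * β * dist A B ^ 2) := by
  have hs : α = - β - γ := by
    rw [hα, hβ, hγ]; field_simp; ring
  have e : ∀ i, bary A B C x y z i - bary A B C x' y' z' i = α * A i + β * B i + γ * C i := by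
    intro i
    simp only [bary, PiLp.smul_apply, PiLp.add_apply, smul_eq_mul]
    rw [hα, hβ, hγ]; field_simp; ring
  clear hα hβ hγ
  have d : ∀ P Q : EuclideanSpace ℝ (Fin 2),
      dist P Q ^ 2 = (P 0 - Q 0) ^ 2 + (P 1 - Q 1) ^ 2 := by
    intro P Q
    rw [EuclideanSpace.dist_eq, Real.sq_sqrt (by positivity), Fin.sum_univ_two,
      Real.dist_eq, Real.dist_eq, sq_abs, sq_abs]
  rw [d, d, d, d, e, e, hs]
  ring

lemma ident10 (u v w a b c : ℝ) (hu : 0 < u) (hv : 0 < v) (hw : 0 < w)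
    (ha : a = v + w) (hb : b = w + u) (hc : c = u + v)
    (A B C : EuclideanSpace ℝ (Fin 2)) (hA : dist B C = a) (hB : dist C A = b)
    (hC : dist A B = c) :
    4 * dist (tcenter (fun a b c => b^4 + c^4 - a^2*b^2 - a^2*c^2 - 2*b^2*c^2) A B C)
      (tcenter (fun a b c => b + c) A B C) ^ 2 =
    ((u + v + w) * (u * v + v * w + w * u) - u * v * w) ^ 2 / (16 * (u + v + w) * (u * v * w))
      - ((u + v + w) * (u * v + v * w + w * u) - u * v * w) / (2 * (u + v + w)) := by
  have hs : u + v + w ≠ 0 := by positivity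
  have e5 : (b^4 + c^4 - a^2*b^2 - a^2*c^2 - 2*b^2*c^2) + (c^4 + a^4 - b^2*c^2 - b^2*a^2 - 2*c^2*a^2)
      + (a^4 + b^4 - c^2*a^2 - c^2*b^2 - 2*a^2*b^2) = -(32 * (u + v + w) * (u * v * w)) := by
    subst ha hb hc; ring
  have e10 : (b + c) + (c + a) + (a + b) = 4 * (u + v + w) := by subst ha hb hc; ring
  unfold tcenter
  simp only [hA, hB, hC]
  rw [dist_sq_bary A B C _ _ _ _ _ _ (by rw [e5]; exact (neg_neg_of_pos (by positivity)).ne)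
    (by rw [e10]; positivity) _ _ _ rfl rfl rfl, hA, hB, hC, e5, e10]
  subst ha hb hc
  field_simp
  ring

lemma ident9 (u v w a b c : ℝ) (hu : 0 < u) (hv : 0 < v) (hw : 0 < w)
    (ha : a = v + w) (hb : b = w + u) (hc : c = u + v)
    (A B C : EuclideanSpace ℝ (Fin 2)) (hA : dist B C = a) (hB : dist C A = b)
    (hC : dist A B = c) :
    4 * dist (tcenter (fun a b c => b^4 + c^4 - a^2*b^2 - a^2*c^2 - 2*b^2*c^2) A B C)
      (tcenter (fun a b c => a*(b + c - a)) A B C) ^ 2 =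
    ((u + v + w) * (u * v + v * w + w * u) - u * v * w) ^ 2 / (16 * (u + v + w) * (u * v * w))
      - u * v * w * ((u + v + w) * (u * v + v * w + w * u) + 3 * (u * v * w))
        / (u * v + v * w + w * u) ^ 2 := by
  have hs : u + v + w ≠ 0 := by positivity
  have hq : u * v + v * w + w * u ≠ 0 := by positivity
  have e5 : (b^4 + c^4 - a^2*b^2 - a^2*c^2 - 2*b^2*c^2) + (c^4 + a^4 - b^2*c^2 - b^2*a^2 - 2*c^2*a^2)
      + (a^4 + b^4 - c^2*a^2 - c^2*b^2 - 2*a^2*b^2) = -(32 * (u + v + w) * (u * v * w)) := by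
    subst ha hb hc; ring
  have e9 : a * (b + c - a) + b * (c + a - b) + c * (a + b - c)
      = 4 * (u * v + v * w + w * u) := by subst ha hb hc; ring
  unfold tcenter
  simp only [hA, hB, hC]
  rw [dist_sq_bary A B C _ _ _ _ _ _ (by rw [e5]; exact (neg_neg_of_pos (by positivity)).ne)
    (by rw [e9]; positivity) _ _ _ rfl rfl rfl, hA, hB, hC, e5, e9]
  subst ha hb hc
  field_simp
  ring

lemma strict_tri (P Q R : EuclideanSpace ℝ (Fin 2)) (h : ¬ Collinear ℝ {P, Q, R}) :
    dist P R < dist P Q + dist Q R := by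
  refine lt_of_le_of_ne (dist_triangle _ _ _) fun e => h ?_
  exact (dist_add_dist_eq_iff.1 e.symm).collinear

theorem stmt_19 (A B C : EuclideanSpace ℝ (Fin 2))
    (h : AffineIndependent ℝ ![A, B, C]) :
    dist (tcenter (fun a b c => b^4 + c^4 - a^2*b^2 - a^2*c^2 - 2*b^2*c^2) A B C) (tcenter (fun a b c => b + c) A B C) ≤ dist (tcenter (fun a b c => b^4 + c^4 - a^2*b^2 - a^2*c^2 - 2*b^2*c^2) A B C) (tcenter (fun a b c => a*(b + c - a)) A B C) ∧
      dist (tcenter (fun a b c => b^4 + c^4 - a^2*b^2 - a^2*c^2 - 2*b^2*c^2) A B C) (tcenter (fun a b c => a*(b + c - a)) A B C) ≤ (7 - 4 * Real.sqrt 2) * dist (tcenter (fun a b c => b^4 + c^4 - a^2*b^2 - a^2*c^2 - 2*b^2*c^2) A B C) (tcenter (fun a b c => b + c) A B C) := by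
  rw [affineIndependent_iff_not_collinear_set] at h
  have h1 := strict_tri A B C h
  have h2 := strict_tri B C A (by convert h using 2; ext; simp; tauto)
  have h3 := strict_tri C A B (by convert h using 2; ext; simp; tauto)
  rw [dist_comm A C] at h1
  rw [dist_comm B A] at h2
  rw [dist_comm C B] at h3
  obtain ⟨u, hu⟩ : ∃ u, u = (dist C A + dist A B - dist B C) / 2 := ⟨_, rfl⟩
  obtain ⟨v, hv⟩ : ∃ v, v = (dist A B + dist B C - dist C A) / 2 := ⟨_, rfl⟩
  obtain ⟨w, hw⟩ : ∃ w, w = (dist B C + dist C A - dist A B) / 2 := ⟨_, rfl⟩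
  have hu0 : 0 < u := by linarith
  have hv0 : 0 < v := by linarith
  have hw0 : 0 < w := by linarith
  have i10 := ident10 u v w _ _ _ hu0 hv0 hw0 rfl rfl rfl A B C (by linarith) (by linarith)
    (by linarith)
  have i9 := ident9 u v w _ _ _ hu0 hv0 hw0 rfl rfl rfl A B C (by linarith) (by linarith)
    (by linarith)
  have l := alg_lower u v w hu0 hv0 hw0 _ _ _ rfl rfl rfl
  have m := alg_upper u v w hu0 hv0 hw0 _ _ _ rfl rfl rfl
  rw [← i10, ← i9] at l m
  have hr3 : Real.sqrt 2 < 1.5 := (Real.sqrt_lt' (by norm_num)).2 (by norm_num)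
  constructor
  · refine (sq_le_sq₀ dist_nonneg dist_nonneg).1 ?_
    linarith
  · refine (sq_le_sq₀ dist_nonneg (mul_nonneg (by linarith) dist_nonneg)).1 ?_
    rw [mul_pow]
    linarith
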